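/- arXiv:1305.3120 — 2 statements merged into one kernel-verified Lean document; each statement's English description precedes it below -/
import Mathlib

section
/- Let Θ ⊆ ℝ^p be a convex set and f : ℝ^p → ℝ be continuous and bounded below on Θ, such that for all θ, θ' ∈ Θ the directional derivative ∇f(θ; θ'−θ) := lim_{t→0⁺} (f(θ + t(θ'−θ)) − f(θ))/t exists. Let (θ_n)_{n≥0} be a sequence in Θ such that for every n ≥ 1 there exists g_n ∈ S_{L,ρ}(f,θ_{n−1}) (a ρ-strongly convex first-order surrogate with ρ > 0) with θ_n a minimizer of g_n over Θ. Then (f(θ_n))_{n≥0} is nonincreasing and the sequence (θ_n) satisfies the asymptotic stationary point condition: liminf_{n→∞} inf_{θ ∈ Θ, θ ≠ θ_n} ∇f(θ_n; θ−θ_n)/‖θ−θ_n‖₂ ≥ 0. -/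
/-!
Write `h = g - f`. Strong convexity of `g`, tested at the midpoint of `κ` and the minimizer `θ⁺`,
gives the sufficient decrease `f θ⁺ ≤ f κ - (ρ/4)‖κ - θ⁺‖²` (`StronglyConvex.quadratic_growth`).
So the objective values decrease, and being bounded below they converge, which forces the steps
`‖θ_{n+1} - θ_n‖` to tend to `0`. On the other hand `g` is minimal at `θ⁺`, so the difference
quotients of `f = g - h` at `θ⁺` are at least those of `-h`; in the limit
`∇f(θ⁺; d) ≥ -⟪∇h(θ⁺), d⟫ ≥ -L‖θ⁺ - κ‖‖d‖` (`IsFirstOrderSurrogate.le_dirDeriv`), the last step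
because `∇h` is `L`-Lipschitz and vanishes at `κ`.
-/

/-- `g` is a first-order surrogate of `f` near `κ` on `Θ` with constant `L`
(the class `S_L(f,κ)`). -/
def IsFirstOrderSurrogate {E : Type*} [NormedAddCommGroup E] [InnerProductSpace ℝ E]
    [CompleteSpace E] (Θ : Set E) (L : ℝ) (f g : E → ℝ) (κ : E) : Prop :=
  (∀ θ' ∈ Θ, (∀ θ ∈ Θ, g θ' ≤ g θ) → f θ' ≤ g θ') ∧
  Differentiable ℝ (fun θ => g θ - f θ) ∧
  (∀ x y : E, ‖gradient (fun θ => g θ - f θ) x - gradient (fun θ => g θ - f θ) y‖ ≤ L * ‖x - y‖) ∧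
  g κ - f κ = 0 ∧
  gradient (fun θ => g θ - f θ) κ = 0

/-- `g` is `ρ`-strongly convex: `θ ↦ g θ - (ρ/2)‖θ‖²` is convex. -/
def StronglyConvex {E : Type*} [NormedAddCommGroup E] [InnerProductSpace ℝ E]
    (ρ : ℝ) (g : E → ℝ) : Prop :=
  ConvexOn ℝ Set.univ (fun θ => g θ - ρ / 2 * ‖θ‖ ^ 2)

/-- The constant `ρ/4` (instead of the optimal `ρ/2`) is what the midpoint of `a` and `b` yields. -/
theorem StronglyConvex.quadratic_growth {E : Type*} [NormedAddCommGroup E]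
    [InnerProductSpace ℝ E] {Θ : Set E} (hΘ : Convex ℝ Θ) {ρ : ℝ} {g : E → ℝ}
    (hg : StronglyConvex ρ g) {a b : E} (ha : a ∈ Θ) (hb : b ∈ Θ)
    (hmin : ∀ θ ∈ Θ, g a ≤ g θ) :
    ρ / 4 * ‖b - a‖ ^ 2 ≤ g b - g a := by
  have hm := hmin _ (hΘ ha hb (by norm_num : (0 : ℝ) ≤ 1 / 2) (by norm_num : (0 : ℝ) ≤ 1 / 2)
    (by norm_num))
  have hc := hg.2 (Set.mem_univ a) (Set.mem_univ b) (by norm_num : (0 : ℝ) ≤ 1 / 2)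
    (by norm_num : (0 : ℝ) ≤ 1 / 2) (by norm_num)
  have hn : ‖(1 / 2 : ℝ) • a + (1 / 2 : ℝ) • b‖ ^ 2
      = (‖a‖ ^ 2 + ‖b‖ ^ 2) / 2 - ‖b - a‖ ^ 2 / 4 := by
    rw [norm_sub_sq_real, norm_add_sq_real, real_inner_smul_left, real_inner_smul_right,
      norm_smul, norm_smul, real_inner_comm, Real.norm_of_nonneg (by norm_num : (0 : ℝ) ≤ 1 / 2)]
    ring
  simp only [smul_eq_mul] at hc
  rw [hn] at hc
  linarith

/-- A minimizer of a surrogate near `κ` is stationary for `f` up to `L` times its distance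
to `κ`. -/
theorem IsFirstOrderSurrogate.le_dirDeriv {E : Type*} [NormedAddCommGroup E]
    [InnerProductSpace ℝ E] [CompleteSpace E] {Θ : Set E} (hΘ : Convex ℝ Θ) {L : ℝ}
    {f g : E → ℝ} {κ a b : E} (hs : IsFirstOrderSurrogate Θ L f g κ) (ha : a ∈ Θ) (hb : b ∈ Θ)
    (hmin : ∀ θ ∈ Θ, g a ≤ g θ) {D : ℝ}
    (hD : Filter.Tendsto (fun t : ℝ => (f (a + t • (b - a)) - f a) / t)
      (nhdsWithin 0 (Set.Ioi 0)) (nhds D)) :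
    -(L * ‖a - κ‖ * ‖b - a‖) ≤ D := by
  obtain ⟨-, hdiff, hlip, -, hgrad⟩ := hs
  set h : E → ℝ := fun θ => g θ - f θ with hh
  have hline : HasDerivAt (fun t : ℝ => a + t • (b - a)) (b - a) 0 := by
    simpa using ((hasDerivAt_id (0 : ℝ)).smul_const (b - a)).const_add a
  have hfd : HasFDerivAt h (InnerProductSpace.toDual ℝ E (gradient h a))
      (a + (0 : ℝ) • (b - a)) := by
    simpa using (hdiff a).hasGradientAt.hasFDerivAt
  have hder := hfd.comp_hasDerivAt (0 : ℝ) hline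
  have hslope : Filter.Tendsto (fun t : ℝ => (h (a + t • (b - a)) - h a) / t)
      (nhdsWithin 0 (Set.Ioi 0)) (nhds (inner ℝ (gradient h a) (b - a))) := by
    have := (hasDerivAt_iff_tendsto_slope_zero.1 hder).mono_left
      (nhdsWithin_mono 0 (fun t (ht : t ∈ Set.Ioi 0) => (Set.mem_Ioi.1 ht).ne'))
    simpa [div_eq_inv_mul] using this
  have hsum : 0 ≤ D + inner ℝ (gradient h a) (b - a) := by
    refine ge_of_tendsto (hD.add hslope) ?_
    filter_upwards [Ioo_mem_nhdsGT (zero_lt_one (α := ℝ))] with t ht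
    have hmem := hmin _ (hΘ.add_smul_sub_mem ha hb ⟨ht.1.le, ht.2.le⟩)
    rw [← add_div]
    refine div_nonneg ?_ ht.1.le
    simp only [hh]
    linarith
  have hcs := real_inner_le_norm (gradient h a) (b - a)
  have hl := hlip a κ
  rw [hgrad, sub_zero] at hl
  have := mul_le_mul_of_nonneg_right hl (norm_nonneg (b - a))
  linarith

/-- Non-convex analysis of the basic majorization-minimization scheme with
`ρ`-strongly convex first-order surrogates: the objective values decrease
monotonically, and the iterates satisfy the asymptotic stationary point
condition `liminf_n inf_{θ ∈ Θ} ∇f(θ_n; θ - θ_n)/‖θ - θ_n‖ ≥ 0`. -/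
theorem stmt2 {p : ℕ} (Θ : Set (EuclideanSpace ℝ (Fin p))) (hΘ : Convex ℝ Θ)
    (f : EuclideanSpace ℝ (Fin p) → ℝ) (hf : Continuous f)
    (hbdd : ∃ B : ℝ, ∀ θ ∈ Θ, B ≤ f θ)
    (df : EuclideanSpace ℝ (Fin p) → EuclideanSpace ℝ (Fin p) → ℝ)
    (hdf : ∀ θ ∈ Θ, ∀ θ' ∈ Θ, Filter.Tendsto
      (fun t : ℝ => (f (θ + t • (θ' - θ)) - f θ) / t)
      (nhdsWithin 0 (Set.Ioi 0)) (nhds (df θ (θ' - θ))))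
    (L ρ : ℝ) (hL : 0 < L) (hρ : 0 < ρ)
    (θs : ℕ → EuclideanSpace ℝ (Fin p)) (hθsΘ : ∀ n, θs n ∈ Θ)
    (gs : ℕ → EuclideanSpace ℝ (Fin p) → ℝ)
    (hsur : ∀ n : ℕ, IsFirstOrderSurrogate Θ L f (gs (n + 1)) (θs n))
    (hsc : ∀ n : ℕ, StronglyConvex ρ (gs (n + 1)))
    (hmin : ∀ n : ℕ, ∀ θ ∈ Θ, gs (n + 1) (θs (n + 1)) ≤ gs (n + 1) θ) :
    (∀ n : ℕ, f (θs (n + 1)) ≤ f (θs n)) ∧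
    (∀ ε : ℝ, 0 < ε → ∃ N : ℕ, ∀ n ≥ N, ∀ θ ∈ Θ, θ ≠ θs n →
      -ε ≤ df (θs n) (θ - θs n) / ‖θ - θs n‖) := by
  have hdec : ∀ n, ρ / 4 * ‖θs n - θs (n + 1)‖ ^ 2 ≤ f (θs n) - f (θs (n + 1)) := fun n => by
    have h1 := (hsc n).quadratic_growth hΘ (hθsΘ (n + 1)) (hθsΘ n) (hmin n)
    have h2 := (hsur n).1 _ (hθsΘ (n + 1)) (hmin n)
    have h3 := (hsur n).2.2.2.1
    linarith
  have hmono : ∀ n, f (θs (n + 1)) ≤ f (θs n) := fun n => by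
    have := hdec n
    have : 0 ≤ ρ / 4 * ‖θs n - θs (n + 1)‖ ^ 2 := by positivity
    linarith
  refine ⟨hmono, fun ε hε => ?_⟩
  obtain ⟨B, hB⟩ := hbdd
  have hlim := tendsto_atTop_ciInf (antitone_nat_of_succ_le hmono)
    ⟨B, by rintro _ ⟨n, rfl⟩; exact hB _ (hθsΘ n)⟩
  have hdiff := hlim.sub (hlim.comp (Filter.tendsto_add_atTop_nat 1))
  rw [sub_self] at hdiff
  -- This bound on the decrease makes the step shorter than `ε / L`.
  obtain ⟨N, hN⟩ := Filter.eventually_atTop.1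
    (hdiff.eventually_lt_const (show 0 < ρ / 4 * (ε / L) ^ 2 by positivity))
  refine ⟨N + 1, fun n hn θ hθ hne => ?_⟩
  obtain ⟨m, rfl⟩ : ∃ m, n = m + 1 := ⟨n - 1, by omega⟩
  have hstep : ‖θs m - θs (m + 1)‖ < ε / L := by
    have h1 := (hdec m).trans_lt (hN m (by omega))
    exact lt_of_pow_lt_pow_left₀ 2 (by positivity) (lt_of_mul_lt_mul_left h1 (by positivity))
  rw [norm_sub_rev, lt_div_iff₀ hL] at hstep
  have hpos : 0 < ‖θ - θs (m + 1)‖ := norm_pos_iff.2 (sub_ne_zero.2 hne)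
  have hlow := (hsur m).le_dirDeriv hΘ (hθsΘ (m + 1)) hθ (hmin m) (hdf _ (hθsΘ (m + 1)) θ hθ)
  rw [le_div_iff₀ hpos]
  have := mul_le_mul_of_nonneg_right hstep.le hpos.le
  linarith
end

section
/- Let Θ₂ ⊆ ℝ^{p₂} be a nonempty closed convex set and f : ℝ^{p₁} × ℝ^{p₂} → ℝ be such that: (i) θ₁ ↦ f(θ₁,θ₂) is differentiable and convex for all θ₂ ∈ Θ₂; (ii) θ₂ ↦ ∇₁f(θ₁,θ₂) is L-Lipschitz continuous on Θ₂ for all θ₁; (iii) θ₁ ↦ ∇₁f(θ₁,θ₂) is L'-Lipschitz continuous for all θ₂ ∈ Θ₂; (iv) θ₂ ↦ f(θ₁,θ₂) is continuous and μ-strongly concave (μ > 0) for all θ₁, with the maximum over Θ₂ attained. Define f̃(θ₁) := max_{θ₂∈Θ₂} f(θ₁,θ₂), fix κ₁ ∈ ℝ^{p₁}, let κ₂* := argmax_{θ₂∈Θ₂} f(κ₁,θ₂), set L'' := max(2L²/μ, L') and g(θ₁) := f(θ₁,κ₂*) + (L''/2)‖θ₁ − κ₁‖₂². Then f̃ is convex,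 g(θ₁) ≥ f̃(θ₁) for all θ₁, g(κ₁) = f̃(κ₁), and the error g − f̃ is differentiable with 2L''-Lipschitz continuous gradient vanishing at κ₁ (i.e., g is a majorant first-order surrogate of f̃ near κ₁ with constant 2L''). -/
/-!
Write `F x = f x (m x)` for the partial maximum, `k = m κ₁` and `M = max (2L²/μ) L'`.

Strong concavity gives quadratic growth at the maximizer,
`f x θ + μ/2 ‖m x - θ‖² ≤ f x (m x)` (`quadratic_growth`). Combining it with the Lipschitz bound on
the gradient differences (`cross_difference_le`) and `L d r - μ/2 d² ≤ L²/(2μ) r²` yields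
`F y ≤ f y (m x) + L²/(2μ) ‖y - x‖²` (`partialMax_le`). At `x = κ₁` this is the majorization,
because `L²/(2μ) ≤ M/2`. In general, with the descent lemma and convexity of `f · (m x)`, it
sandwiches `F y - F x - ⟪∇₁f(x, m x), y - x⟫` between `0` and `(L' + L²/μ)/2 ‖y - x‖²`.

The error `h = f · k + M/2 ‖· - κ₁‖² - F` is a difference of two convex functions, whose
linearization errors lie in `[M/2, (L' + M)/2] ‖y - x‖²` and `[0, (L' + L²/μ)/2] ‖y - x‖²`. Hence the
linearization error of `h` is at most `2M/2 ‖y - x‖²` in absolute value. Such a two-sided bound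
forces `h` to be differentiable (`hasGradientAt_of_quadratic_bound`) with `2M`-Lipschitz gradient
(`lipschitz_of_quadratic_bound`). Bounding the gradients of the three terms of `h` separately by the
triangle inequality would lose the constant `2M`.
-/

section SmoothAnalysis

variable {E : Type*} [NormedAddCommGroup E] [InnerProductSpace ℝ E] [CompleteSpace E]

lemma hasDerivAt_along_line {φ : E → ℝ} (hd : Differentiable ℝ φ) (x d : E) (t : ℝ) :
    HasDerivAt (fun s : ℝ => φ (x + s • d)) (inner ℝ (gradient φ (x + t • d)) d) t := by
  have h1 : HasFDerivAt φ (InnerProductSpace.toDual ℝ E (gradient φ (x + t • d))) (x + t • d) :=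
    (hd _).hasGradientAt.hasFDerivAt
  have h2 : HasDerivAt (fun s : ℝ => x + s • d) d t := by
    simpa using ((hasDerivAt_id t).smul_const d).const_add x
  have h3 := h1.comp_hasDerivAt t h2
  rwa [InnerProductSpace.toDual_apply_apply] at h3

/-- First-order characterization of convexity: a differentiable convex function lies above its
tangents. -/
lemma convex_tangent_le {φ : E → ℝ} (hd : Differentiable ℝ φ) (hc : ConvexOn ℝ Set.univ φ)
    (x y : E) : φ x + inner ℝ (gradient φ x) (y - x) ≤ φ y := by
  have hline : ConvexOn ℝ Set.univ (fun s : ℝ => φ (x + s • (y - x))) := by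
    have := hc.comp_affineMap (AffineMap.lineMap (k := ℝ) x y)
    refine this.congr ?_ |>.subset (by simp) convex_univ
    intro s _
    simp [AffineMap.lineMap_apply, add_comm]
  have hder := hasDerivAt_along_line hd x (y - x) 0
  have := hline.le_slope_of_hasDerivAt (Set.mem_univ 0) (Set.mem_univ 1) one_pos hder
  simp only [slope_def_field, zero_smul, one_smul, add_zero, add_sub_cancel, sub_zero,
    div_one] at this
  linarith

/-- The descent lemma: a function with `K`-Lipschitz gradient exceeds its tangents by at most
`K/2 ‖y - x‖²`. -/
lemma descent_lemma {φ : E → ℝ} {K : ℝ} (hd : Differentiable ℝ φ)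
    (hK : ∀ x y, ‖gradient φ x - gradient φ y‖ ≤ K * ‖x - y‖) (x y : E) :
    φ y ≤ φ x + inner ℝ (gradient φ x) (y - x) + K / 2 * ‖y - x‖ ^ 2 := by
  set d := y - x with hdef
  have hder : ∀ t : ℝ, HasDerivAt
      (fun s : ℝ => φ (x + s • d) - s * inner ℝ (gradient φ x) d - K / 2 * ‖d‖ ^ 2 * s ^ 2)
      (inner ℝ (gradient φ (x + t • d)) d - inner ℝ (gradient φ x) d - K * ‖d‖ ^ 2 * t) t := by
    intro t
    have h1 := hasDerivAt_along_line hd x d t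
    have h2 := (hasDerivAt_id t).mul_const (inner ℝ (gradient φ x) d)
    have h3 := ((hasDerivAt_id t).pow 2).const_mul (K / 2 * ‖d‖ ^ 2)
    refine ((h1.sub h2).sub h3).congr_deriv ?_
    simp
    ring
  have hanti : AntitoneOn
      (fun s : ℝ => φ (x + s • d) - s * inner ℝ (gradient φ x) d - K / 2 * ‖d‖ ^ 2 * s ^ 2)
      (Set.Icc 0 1) := by
    refine antitoneOn_of_deriv_nonpos (convex_Icc 0 1)
      (fun t _ => (hder t).continuousAt.continuousWithinAt)
      (fun t _ => (hder t).differentiableAt.differentiableWithinAt) ?_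
    intro t ht
    rw [interior_Icc] at ht
    rw [(hder t).deriv, ← inner_sub_left]
    have h1 := real_inner_le_norm (gradient φ (x + t • d) - gradient φ x) d
    have h2 := hK (x + t • d) x
    rw [add_sub_cancel_left, norm_smul, Real.norm_of_nonneg ht.1.le] at h2
    have h3 := mul_le_mul_of_nonneg_right h2 (norm_nonneg d)
    linarith
  have := hanti (Set.left_mem_Icc.2 zero_le_one) (Set.right_mem_Icc.2 zero_le_one) zero_le_one
  have hy : x + d = y := by rw [hdef, add_sub_cancel]
  simp only [zero_smul, one_smul, add_zero, hy] at this
  linarith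

lemma hasGradientAt_of_quadratic_bound {h : E → ℝ} {g x : E} {C : ℝ}
    (hb : ∀ y, |h y - h x - inner ℝ g (y - x)| ≤ C * ‖y - x‖ ^ 2) : HasGradientAt h g x := by
  rw [hasGradientAt_iff_isLittleO]
  have h1 : (fun y => h y - h x - inner ℝ g (y - x)) =O[nhds x] (fun y => ‖y - x‖ ^ 2) := by
    refine Asymptotics.IsBigO.of_bound C (Filter.Eventually.of_forall fun y => ?_)
    simpa using hb y
  exact h1.trans_isLittleO (Asymptotics.isLittleO_pow_sub_sub x one_lt_two)

/-- If the linearizations of `h` along `G` have error at most `K/2 ‖y - x‖²`, then `G` is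
`K`-Lipschitz. -/
lemma lipschitz_of_quadratic_bound_pos {h : E → ℝ} {G : E → E} {K : ℝ} (hK : 0 < K)
    (hb : ∀ x y, |h y - h x - inner ℝ (G x) (y - x)| ≤ K / 2 * ‖y - x‖ ^ 2) (x y : E) :
    ‖G x - G y‖ ≤ K * ‖x - y‖ := by
  -- Evaluate the bounds from `x` and `y` at the points `c ± (2K)⁻¹ u`, where `c` is the midpoint
  -- of `x` and `y`: with `d = (x - y)/2`, the four displacements are `± d ± (2K)⁻¹ u`.
  obtain ⟨u, hu⟩ : ∃ u, u = G x - G y := ⟨_, rfl⟩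
  obtain ⟨d, hd⟩ : ∃ d, d = (1 / 2 : ℝ) • (x - y) := ⟨_, rfl⟩
  obtain ⟨v, hv⟩ : ∃ v, v = (1 / (2 * K)) • u := ⟨_, rfl⟩
  have hxy : x - y = (2 : ℝ) • d := by rw [hd, smul_smul]; norm_num
  have hx : x = y + (2 : ℝ) • d := by rw [← hxy]; abel
  have e1 : y + d - v - x = -(d + v) := by rw [hx, two_smul]; abel
  have e2 : y + d - v - y = d - v := by abel
  have e3 : y + d + v - x = -(d - v) := by rw [hx, two_smul]; abel
  have e4 : y + d + v - y = d + v := by abel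
  have b1 := (abs_le.1 (hb x (y + d - v))).2
  have b2 := (abs_le.1 (hb y (y + d - v))).1
  have b3 := (abs_le.1 (hb x (y + d + v))).1
  have b4 := (abs_le.1 (hb y (y + d + v))).2
  rw [e1, norm_neg] at b1
  rw [e2] at b2
  rw [e3, norm_neg] at b3
  rw [e4] at b4
  have hpar := parallelogram_law_with_norm ℝ d v
  have hin : inner ℝ (G x) v - inner ℝ (G y) v = 1 / (2 * K) * ‖u‖ ^ 2 := by
    rw [← inner_sub_left, ← hu, hv, inner_smul_right, real_inner_self_eq_norm_sq]
  have hvn : ‖v‖ ^ 2 = (1 / (2 * K)) ^ 2 * ‖u‖ ^ 2 := by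
    rw [hv, norm_smul, mul_pow, Real.norm_eq_abs, sq_abs]
  have hdn : ‖x - y‖ ^ 2 = 4 * ‖d‖ ^ 2 := by
    rw [hxy, norm_smul, mul_pow]; norm_num
  simp only [inner_neg_right, inner_add_right, inner_sub_right] at b1 b2 b3 b4
  have key : 2 * (1 / (2 * K) * ‖u‖ ^ 2) ≤ K * (2 * ‖d‖ ^ 2 + 2 * ‖v‖ ^ 2) := by
    have : K * (2 * ‖d‖ ^ 2 + 2 * ‖v‖ ^ 2) = K * ‖d + v‖ ^ 2 + K * ‖d - v‖ ^ 2 := by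
      linear_combination -K * hpar
    rw [this, ← hin]
    linarith
  rw [hvn] at key
  have h4 : ‖u‖ ^ 2 ≤ (K * ‖x - y‖) ^ 2 := by
    rw [mul_pow, hdn]
    have hm := mul_le_mul_of_nonneg_left key hK.le
    have l1 : K * (2 * (1 / (2 * K) * ‖u‖ ^ 2)) = ‖u‖ ^ 2 := by field_simp
    have l2 : K * (K * (2 * ‖d‖ ^ 2 + 2 * ((1 / (2 * K)) ^ 2 * ‖u‖ ^ 2)))
        = 2 * K ^ 2 * ‖d‖ ^ 2 + ‖u‖ ^ 2 / 2 := by field_simp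
    rw [l1, l2] at hm
    linarith
  rw [← hu]
  exact le_of_sq_le_sq h4 (by positivity)

lemma lipschitz_of_quadratic_bound {h : E → ℝ} {G : E → E} {K : ℝ} (hK : 0 ≤ K)
    (hb : ∀ x y, |h y - h x - inner ℝ (G x) (y - x)| ≤ K / 2 * ‖y - x‖ ^ 2) (x y : E) :
    ‖G x - G y‖ ≤ K * ‖x - y‖ := by
  have hlim : Filter.Tendsto (fun ε : ℝ => (K + ε) * ‖x - y‖) (nhdsWithin 0 (Set.Ioi 0))
      (nhds (K * ‖x - y‖)) := by
    have : Continuous (fun ε : ℝ => (K + ε) * ‖x - y‖) := by fun_prop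
    simpa using (this.tendsto 0).mono_left nhdsWithin_le_nhds
  refine ge_of_tendsto hlim ?_
  filter_upwards [self_mem_nhdsWithin] with ε hε
  have hε : 0 < ε := hε
  refine lipschitz_of_quadratic_bound_pos (h := h) (by linarith) (fun a b => ?_) x y
  refine (hb a b).trans ?_
  gcongr
  linarith

/-- A function whose gradient has norm at most `C` is `C`-Lipschitz, applied to the difference of
two functions. -/
lemma cross_difference_le {φ ψ : E → ℝ} {C : ℝ} (hφ : Differentiable ℝ φ)
    (hψ : Differentiable ℝ ψ) (hC : ∀ x, ‖gradient φ x - gradient ψ x‖ ≤ C) (x y : E) :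
    (φ y - ψ y) - (φ x - ψ x) ≤ C * ‖y - x‖ := by
  have hder : ∀ z ∈ Set.univ, HasFDerivWithinAt (fun z => φ z - ψ z)
      (InnerProductSpace.toDual ℝ E (gradient φ z - gradient ψ z)) Set.univ z := by
    intro z _
    rw [map_sub]
    exact ((hφ z).hasGradientAt.hasFDerivAt.sub
      (hψ z).hasGradientAt.hasFDerivAt).hasFDerivWithinAt
  have := convex_univ.norm_image_sub_le_of_norm_hasFDerivWithin_le (C := C) hder
    (fun z _ => by simpa only [LinearIsometryEquiv.norm_map] using hC z)
    (Set.mem_univ x) (Set.mem_univ y)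
  exact (le_abs_self _).trans this

end SmoothAnalysis

/-- A strongly concave function decreases at least quadratically away from a maximizer `a` over a
convex set. -/
lemma quadratic_growth {E : Type*} [NormedAddCommGroup E] [InnerProductSpace ℝ E] {S : Set E}
    (hS : Convex ℝ S) {φ : E → ℝ} {μ : ℝ}
    (hc : ConcaveOn ℝ Set.univ (fun y => φ y + μ / 2 * ‖y‖ ^ 2)) {a b : E} (ha : a ∈ S)
    (hb : b ∈ S) (hmax : ∀ y ∈ S, φ y ≤ φ a) : φ b + μ / 2 * ‖a - b‖ ^ 2 ≤ φ a := by
  -- Compare `φ a` with `φ` at the point `(1 - t) a + t b`, divide by `t`, and let `t → 0`.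
  have hstep : ∀ t ∈ Set.Ioo (0 : ℝ) 1, φ b + μ / 2 * (1 - t) * ‖a - b‖ ^ 2 ≤ φ a := by
    rintro t ⟨h0, h1⟩
    have h2 := hc.2 (Set.mem_univ a) (Set.mem_univ b) (sub_nonneg.2 h1.le) h0.le (by ring)
    have h3 := hmax _ (hS ha hb (sub_nonneg.2 h1.le) h0.le (by ring))
    have h4 : ‖(1 - t) • a + t • b‖ ^ 2
        = (1 - t) * ‖a‖ ^ 2 + t * ‖b‖ ^ 2 - t * (1 - t) * ‖a - b‖ ^ 2 := by
      rw [norm_add_sq_real, norm_sub_sq_real, norm_smul, norm_smul, inner_smul_left,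
        inner_smul_right, mul_pow, mul_pow, Real.norm_eq_abs, Real.norm_eq_abs, sq_abs, sq_abs]
      simp
      ring
    simp only [smul_eq_mul] at h2
    rw [h4] at h2
    have h5 : t * (φ b + μ / 2 * (1 - t) * ‖a - b‖ ^ 2) ≤ t * φ a := by linarith
    exact le_of_mul_le_mul_left h5 h0
  have hlim : Filter.Tendsto (fun t : ℝ => φ b + μ / 2 * (1 - t) * ‖a - b‖ ^ 2)
      (nhdsWithin 0 (Set.Ioi 0)) (nhds (φ b + μ / 2 * ‖a - b‖ ^ 2)) := by
    have : Continuous (fun t : ℝ => φ b + μ / 2 * (1 - t) * ‖a - b‖ ^ 2) := by fun_prop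
    simpa using (this.tendsto 0).mono_left nhdsWithin_le_nhds
  refine le_of_tendsto hlim ?_
  filter_upwards [Ioo_mem_nhdsGT (zero_lt_one' ℝ)] with t ht using hstep t ht

/-- Freezing the maximizer at `x` underestimates the partial maximum at `y` by at most
`L²/(2μ) ‖y - x‖²`. -/
lemma partialMax_le {E E' : Type*} [NormedAddCommGroup E] [InnerProductSpace ℝ E]
    [CompleteSpace E] [NormedAddCommGroup E'] [InnerProductSpace ℝ E'] {S : Set E'}
    (hS : Convex ℝ S) {f : E → E' → ℝ} {L μ : ℝ} (hμ : 0 < μ)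
    (hdiff : ∀ θ ∈ S, Differentiable ℝ (fun x => f x θ))
    (hlip : ∀ x : E, ∀ y ∈ S, ∀ z ∈ S,
      ‖gradient (fun x => f x y) x - gradient (fun x => f x z) x‖ ≤ L * ‖y - z‖)
    (hscc : ∀ x, ConcaveOn ℝ Set.univ (fun y => f x y + μ / 2 * ‖y‖ ^ 2))
    {m : E → E'} (hm : ∀ x, m x ∈ S ∧ ∀ θ ∈ S, f x θ ≤ f x (m x)) (x y : E) :
    f y (m y) ≤ f y (m x) + L ^ 2 / μ / 2 * ‖y - x‖ ^ 2 := by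
  have h1 := quadratic_growth hS (hscc x) (hm x).1 (hm y).1 (hm x).2
  have h2 := cross_difference_le (hdiff _ (hm y).1) (hdiff _ (hm x).1)
    (fun z => hlip z _ (hm y).1 _ (hm x).1) x y
  rw [norm_sub_rev] at h1
  -- Completing the square in `‖m y - m x‖`.
  have h3 : L * ‖m y - m x‖ * ‖y - x‖ - μ / 2 * ‖m y - m x‖ ^ 2
      ≤ L ^ 2 / μ / 2 * ‖y - x‖ ^ 2 := by
    have h4 : L ^ 2 / μ / 2 * ‖y - x‖ ^ 2
        - (L * ‖m y - m x‖ * ‖y - x‖ - μ / 2 * ‖m y - m x‖ ^ 2)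
        = (L * ‖y - x‖ - μ * ‖m y - m x‖) ^ 2 / (2 * μ) := by field_simp; ring
    have h5 : 0 ≤ (L * ‖y - x‖ - μ * ‖m y - m x‖) ^ 2 / (2 * μ) := by positivity
    linarith
  linarith


/-- Saddle point surrogate: with `f(θ₁,·)` μ-strongly concave and `f(·,θ₂)`
convex, the function `g(θ₁) = f(θ₁,κ₂*) + (L''/2)‖θ₁ - κ₁‖²` with
`κ₂* = argmax_{θ₂ ∈ Θ₂} f(κ₁,θ₂)` and `L'' = max(2L²/μ, L')` is a majorant
first-order surrogate of `f̃(θ₁) = max_{θ₂ ∈ Θ₂} f(θ₁,θ₂)` near `κ₁` with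
constant `2L''`, and `f̃` is convex. -/
theorem stmt18 {p₁ p₂ : ℕ} (Θ₂ : Set (EuclideanSpace ℝ (Fin p₂)))
    (hne : Θ₂.Nonempty) (hclosed : IsClosed Θ₂) (hconv : Convex ℝ Θ₂)
    (f : EuclideanSpace ℝ (Fin p₁) → EuclideanSpace ℝ (Fin p₂) → ℝ)
    (L L' μ : ℝ) (hμ : 0 < μ)
    -- θ₁ ↦ f(θ₁,θ₂) is differentiable and convex for all θ₂ ∈ Θ₂
    (hdiff : ∀ θ₂ ∈ Θ₂, Differentiable ℝ (fun x => f x θ₂))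
    (hcvx1 : ∀ θ₂ ∈ Θ₂, ConvexOn ℝ Set.univ (fun x => f x θ₂))
    -- θ₂ ↦ ∇₁f(θ₁,θ₂) is L-Lipschitz on Θ₂ for all θ₁
    (hlip : ∀ θ₁ : EuclideanSpace ℝ (Fin p₁), ∀ y ∈ Θ₂, ∀ z ∈ Θ₂,
      ‖gradient (fun x => f x y) θ₁ - gradient (fun x => f x z) θ₁‖ ≤ L * ‖y - z‖)
    -- θ₁ ↦ ∇₁f(θ₁,θ₂) is L'-Lipschitz for all θ₂ ∈ Θ₂
    (hlip' : ∀ θ₂ ∈ Θ₂, ∀ x y : EuclideanSpace ℝ (Fin p₁),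
      ‖gradient (fun z => f z θ₂) x - gradient (fun z => f z θ₂) y‖ ≤ L' * ‖x - y‖)
    -- θ₂ ↦ f(θ₁,θ₂) is continuous and μ-strongly concave for all θ₁
    (hcont : ∀ θ₁, Continuous (f θ₁))
    (hscc : ∀ θ₁, ConcaveOn ℝ Set.univ (fun y => f θ₁ y + μ / 2 * ‖y‖ ^ 2))
    -- m θ₁ is the maximizer of f(θ₁,·) over Θ₂, so f̃ θ₁ = f θ₁ (m θ₁)
    (m : EuclideanSpace ℝ (Fin p₁) → EuclideanSpace ℝ (Fin p₂))
    (hm : ∀ θ₁, m θ₁ ∈ Θ₂ ∧ ∀ θ₂ ∈ Θ₂, f θ₁ θ₂ ≤ f θ₁ (m θ₁))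
    -- fixed point κ₁, with κ₂* := m κ₁,
    -- g := fun x => f x (m κ₁) + L''/2 * ‖x - κ₁‖², L'' := max (2L²/μ) L'
    (κ₁ : EuclideanSpace ℝ (Fin p₁)) :
    ConvexOn ℝ Set.univ (fun x => f x (m x)) ∧
    (∀ θ₁, f θ₁ (m θ₁) ≤
      f θ₁ (m κ₁) + max (2 * L ^ 2 / μ) L' / 2 * ‖θ₁ - κ₁‖ ^ 2) ∧
    f κ₁ (m κ₁) + max (2 * L ^ 2 / μ) L' / 2 * ‖κ₁ - κ₁‖ ^ 2 = f κ₁ (m κ₁) ∧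
    Differentiable ℝ (fun x =>
      (f x (m κ₁) + max (2 * L ^ 2 / μ) L' / 2 * ‖x - κ₁‖ ^ 2) - f x (m x)) ∧
    (∀ x y : EuclideanSpace ℝ (Fin p₁),
      ‖gradient (fun z =>
          (f z (m κ₁) + max (2 * L ^ 2 / μ) L' / 2 * ‖z - κ₁‖ ^ 2) - f z (m z)) x -
        gradient (fun z =>
          (f z (m κ₁) + max (2 * L ^ 2 / μ) L' / 2 * ‖z - κ₁‖ ^ 2) - f z (m z)) y‖ ≤
        2 * max (2 * L ^ 2 / μ) L' * ‖x - y‖) ∧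
    gradient (fun z =>
      (f z (m κ₁) + max (2 * L ^ 2 / μ) L' / 2 * ‖z - κ₁‖ ^ 2) - f z (m z)) κ₁ = 0 := by
  have hgap := partialMax_le hconv hμ hdiff hlip hscc hm
  obtain ⟨M, hM⟩ : ∃ M, M = max (2 * L ^ 2 / μ) L' := ⟨_, rfl⟩
  rw [← hM]
  have hM1 : 2 * (L ^ 2 / μ) ≤ M := by rw [hM, ← mul_div_assoc]; exact le_max_left _ _
  have hM2 : L' ≤ M := hM ▸ le_max_right _ _
  have hLμ : 0 ≤ L ^ 2 / μ := by positivity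
  obtain ⟨G, hG⟩ : ∃ G : EuclideanSpace ℝ (Fin p₁) → EuclideanSpace ℝ (Fin p₁),
      G = fun x => gradient (fun z => f z (m κ₁)) x + M • (x - κ₁)
        - gradient (fun z => f z (m x)) x := ⟨_, rfl⟩
  obtain ⟨h, hh⟩ : ∃ h : EuclideanSpace ℝ (Fin p₁) → ℝ,
      h = fun z => (f z (m κ₁) + M / 2 * ‖z - κ₁‖ ^ 2) - f z (m z) := ⟨_, rfl⟩
  have hbound : ∀ x y, |h y - h x - inner ℝ (G x) (y - x)| ≤ (2 * M) / 2 * ‖y - x‖ ^ 2 := by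
    intro x y
    have hk := (hm κ₁).1
    have hx := (hm x).1
    have a1 := convex_tangent_le (hdiff _ hk) (hcvx1 _ hk) x y
    have a2 := descent_lemma (hdiff _ hk) (hlip' _ hk) x y
    have a3 := convex_tangent_le (hdiff _ hx) (hcvx1 _ hx) x y
    have a4 := descent_lemma (hdiff _ hx) (hlip' _ hx) x y
    have a5 := hgap x y
    have a6 := (hm y).2 _ hx
    have hq : ‖y - κ₁‖ ^ 2
        = ‖x - κ₁‖ ^ 2 + 2 * inner ℝ (x - κ₁) (y - x) + ‖y - x‖ ^ 2 := by
      rw [← norm_add_sq_real]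
      congr 2
      abel
    have hGi : inner ℝ (G x) (y - x) = inner ℝ (gradient (fun z => f z (m κ₁)) x) (y - x)
        + M * inner ℝ (x - κ₁) (y - x)
        - inner ℝ (gradient (fun z => f z (m x)) x) (y - x) := by
      simp only [hG, inner_sub_left (_ + _), inner_add_left, real_inner_smul_left]
    have b1 := mul_le_mul_of_nonneg_right hM1 (sq_nonneg ‖y - x‖)
    have b2 := mul_le_mul_of_nonneg_right hM2 (sq_nonneg ‖y - x‖)
    have b3 := mul_nonneg hLμ (sq_nonneg ‖y - x‖)
    rw [hGi, hh]
    simp only [hq]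
    rw [abs_le]
    constructor <;> linarith
  have hgrad : ∀ x, HasGradientAt h (G x) x := fun x =>
    hasGradientAt_of_quadratic_bound (hbound x)
  have hgrad' : ∀ x, gradient h x = G x := fun x => (hgrad x).gradient
  rw [← hh]
  refine ⟨⟨convex_univ, ?_⟩, ?_, by simp, fun x => (hgrad x).differentiableAt, ?_, ?_⟩
  · intro x _ y _ a b ha hb hab
    -- The partial maximum is convex as a pointwise supremum of convex functions.
    obtain ⟨w, hw⟩ : ∃ w, w = m (a • x + b • y) := ⟨_, rfl⟩
    have hwS : w ∈ Θ₂ := hw ▸ (hm _).1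
    have h1 := (hcvx1 w hwS).2 (Set.mem_univ x) (Set.mem_univ y) ha hb hab
    simp only [smul_eq_mul] at h1 ⊢
    rw [← hw]
    have h2 := mul_le_mul_of_nonneg_left ((hm x).2 w hwS) ha
    have h3 := mul_le_mul_of_nonneg_left ((hm y).2 w hwS) hb
    linarith
  · intro x
    have h1 := hgap κ₁ x
    have h2 := mul_le_mul_of_nonneg_right hM1 (sq_nonneg ‖x - κ₁‖)
    have h3 := mul_nonneg hLμ (sq_nonneg ‖x - κ₁‖)
    linarith
  · intro x y
    rw [hgrad', hgrad']
    exact lipschitz_of_quadratic_bound (by linarith) hbound x y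
  · rw [hgrad', hG]
    simp
end
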